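/- arXiv:math/9912122 — 2 statements merged into one kernel-verified Lean document; each statement's English description precedes it below -/
import Mathlib

section
/- Let Ω ⊂ ℂⁿ be a bounded convex open set whose boundary contains no nontrivial affine analytic disc, i.e., there are no a ∈ ℂⁿ and b ∈ ℂⁿ \ {0} with {a + ζb : ζ ∈ ℂ, |ζ| < 1} ⊆ ∂Ω. Then ∂Ω satisfies property (P₁): for every M > 0 there exist an open neighborhood U of ∂Ω and a C^∞ function λ : U → ℝ with 0 ≤ λ ≤ 1 such that ∑_{j,k=1}^n (∂²λ/∂z_j∂z̄_k)(z) w_j conj(w_k) ≥ M·|w|² for every z ∈ U and every w ∈ ℂⁿ. (This is the implication (2) ⇒ (3) of Theorem 11 for convex domains and q = 1, using that for convex boundaries the absence of analytic varieties is equivalent to the absence of affine ones.) -/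
noncomputable section

/-- The Wirtinger derivative `∂φ/∂z̄ⱼ = (1/2)(∂φ/∂xⱼ + i ∂φ/∂yⱼ)`. -/
def dzbar {n : ℕ} (φ : (Fin n → ℂ) → ℂ) (j : Fin n) (z : Fin n → ℂ) : ℂ :=
  (1 / 2) * (fderiv ℝ φ z (Pi.single j 1) + Complex.I * fderiv ℝ φ z (Pi.single j Complex.I))

/-- The Wirtinger derivative `∂φ/∂zⱼ = (1/2)(∂φ/∂xⱼ − i ∂φ/∂yⱼ)`. -/
def dz {n : ℕ} (φ : (Fin n → ℂ) → ℂ) (j : Fin n) (z : Fin n → ℂ) : ℂ :=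
  (1 / 2) * (fderiv ℝ φ z (Pi.single j 1) - Complex.I * fderiv ℝ φ z (Pi.single j Complex.I))

/-- generic first order operator -/
def Dop {n : ℕ} (s : ℂ) (φ : (Fin n → ℂ) → ℂ) (j : Fin n) (z : Fin n → ℂ) : ℂ :=
  (1 / 2) * (fderiv ℝ φ z (Pi.single j 1) + s * fderiv ℝ φ z (Pi.single j Complex.I))

lemma dzbar_eq {n : ℕ} (φ : (Fin n → ℂ) → ℂ) (j : Fin n) (z : Fin n → ℂ) :
    dzbar φ j z = Dop Complex.I φ j z := rfl

lemma dz_eq {n : ℕ} (φ : (Fin n → ℂ) → ℂ) (j : Fin n) (z : Fin n → ℂ) :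
    dz φ j z = Dop (-Complex.I) φ j z := by
  unfold dz Dop; ring

section rules
variable {n : ℕ} {s : ℂ} {f g : (Fin n → ℂ) → ℂ} {j : Fin n} {z : Fin n → ℂ}

lemma Dop_add (hf : DifferentiableAt ℝ f z) (hg : DifferentiableAt ℝ g z) :
    Dop s (fun x => f x + g x) j z = Dop s f j z + Dop s g j z := by
  unfold Dop; rw [fderiv_fun_add hf hg]; simp; ring

lemma Dop_mul (hf : DifferentiableAt ℝ f z) (hg : DifferentiableAt ℝ g z) :
    Dop s (fun x => f x * g x) j z = Dop s f j z * g z + f z * Dop s g j z := by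
  unfold Dop; rw [fderiv_fun_mul hf hg]; simp; ring

lemma Dop_const (c : ℂ) : Dop s (fun _ => c) j z = 0 := by
  unfold Dop; simp

lemma Dop_const_mul (c : ℂ) (hf : DifferentiableAt ℝ f z) :
    Dop s (fun x => c * f x) j z = c * Dop s f j z := by
  rw [Dop_mul (differentiableAt_const c) hf, Dop_const]; ring

lemma Dop_sum {ι : Type*} (t : Finset ι) (f : ι → (Fin n → ℂ) → ℂ)
    (hf : ∀ i ∈ t, DifferentiableAt ℝ (f i) z) :
    Dop s (fun x => ∑ i ∈ t, f i x) j z = ∑ i ∈ t, Dop s (f i) j z := by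
  unfold Dop; rw [fderiv_fun_sum hf]; simp only [sum_apply, Finset.mul_sum, ← Finset.sum_add_distrib]

lemma Dop_inv (hf : DifferentiableAt ℝ f z) (h0 : f z ≠ 0) :
    Dop s (fun x => (f x)⁻¹) j z = - (Dop s f j z) / (f z) ^ 2 := by
  have h1 : DifferentiableAt ℝ (fun x => (f x)⁻¹) z := hf.inv h0
  have h2 := Dop_mul (s := s) (j := j) hf h1
  have h3 : Dop s (fun x => f x * (f x)⁻¹) j z = 0 := by
    have : (fun x => f x * (f x)⁻¹) =ᶠ[nhds z] fun _ => 1 := by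
      filter_upwards [hf.continuousAt.eventually_ne h0] with x hx
      exact mul_inv_cancel₀ hx
    unfold Dop; rw [this.fderiv_eq]; simp
  rw [h3] at h2
  field_simp at h2 ⊢
  linear_combination -h2

lemma Dop_hol (hf : DifferentiableAt ℂ f z) :
    Dop s f j z = (1 / 2) * (1 + s * Complex.I) * fderiv ℂ f z (Pi.single j 1) := by
  unfold Dop
  have h : fderiv ℝ f z = (fderiv ℂ f z).restrictScalars ℝ :=
    (hf.hasFDerivAt.restrictScalars ℝ).fderiv
  have h2 : (Pi.single j Complex.I : Fin n → ℂ) = Complex.I • Pi.single j 1 := by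
    rw [← Pi.single_smul]; simp
  rw [h, h2]; simp only [ContinuousLinearMap.coe_restrictScalars', map_smul, smul_eq_mul]; ring

lemma Dop_conj (hf : DifferentiableAt ℂ f z) :
    Dop s (fun x => (starRingEnd ℂ) (f x)) j z =
      (1 / 2) * (1 - s * Complex.I) * (starRingEnd ℂ) (fderiv ℂ f z (Pi.single j 1)) := by
  unfold Dop
  have h : fderiv ℝ (fun x => (starRingEnd ℂ) (f x)) z =
      (Complex.conjCLE : ℂ →L[ℝ] ℂ).comp ((fderiv ℂ f z).restrictScalars ℝ) :=
    ((Complex.conjCLE : ℂ →L[ℝ] ℂ).hasFDerivAt.comp z (hf.hasFDerivAt.restrictScalars ℝ)).fderiv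
  have h2 : (Pi.single j Complex.I : Fin n → ℂ) = Complex.I • Pi.single j 1 := by
    rw [← Pi.single_smul]; simp
  rw [h, h2]; simp; ring

lemma Dop_log {g : (Fin n → ℂ) → ℝ} (hg : DifferentiableAt ℝ g z) (h0 : g z ≠ 0) :
    Dop s (fun x => ((Real.log (g x) : ℝ) : ℂ)) j z =
      Dop s (fun x => ((g x : ℝ) : ℂ)) j z * ((g z : ℝ) : ℂ)⁻¹ := by
  have h1 : fderiv ℝ (fun x => ((Real.log (g x) : ℝ) : ℂ)) z =
      Complex.ofRealCLM.comp ((g z)⁻¹ • fderiv ℝ g z) :=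
    (Complex.ofRealCLM.hasFDerivAt.comp z (hg.hasFDerivAt.log h0)).fderiv
  have h2 : fderiv ℝ (fun x => ((g x : ℝ) : ℂ)) z =
      Complex.ofRealCLM.comp (fderiv ℝ g z) :=
    (Complex.ofRealCLM.hasFDerivAt.comp z hg.hasFDerivAt).fderiv
  unfold Dop; rw [h1, h2]; simp; ring

end rules

lemma fderiv_coord {n : ℕ} (k j : Fin n) (z : Fin n → ℂ) :
    fderiv ℂ (fun x : Fin n → ℂ => x k) z (Pi.single j 1) = if k = j then 1 else 0 := by
  have : fderiv ℂ (fun x : Fin n → ℂ => x k) z = ContinuousLinearMap.proj k :=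
    (ContinuousLinearMap.proj (R := ℂ) (φ := fun _ : Fin n => ℂ) k).hasFDerivAt.fderiv
  rw [this]; simp [Pi.single_apply]

lemma cs_aux {ι : Type*} (t : Finset ι) (a b : ι → ℂ) :
    ‖∑ i ∈ t, a i * (starRingEnd ℂ) (b i)‖ ^ 2 ≤ (∑ i ∈ t, ‖a i‖ ^ 2) * ∑ i ∈ t, ‖b i‖ ^ 2 := by
  have h1 : ‖∑ i ∈ t, a i * (starRingEnd ℂ) (b i)‖ ≤ ∑ i ∈ t, ‖a i‖ * ‖b i‖ := by
    refine (norm_sum_le _ _).trans (le_of_eq ?_)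
    simp
  calc _ ≤ (∑ i ∈ t, ‖a i‖ * ‖b i‖) ^ 2 := by gcongr
    _ ≤ _ := Finset.sum_mul_sq_le_sq_mul_sq _ _ _

lemma sum_aux {n : ℕ} (δ X Y : Fin n → Fin n → ℂ) (w : Fin n → ℂ) (β γ G : ℂ) :
    ∑ j, ∑ k, (β * δ j k + γ * (X j k * G⁻¹ - Y j k / G ^ 2)) * w j * (starRingEnd ℂ) (w k) =
    β * (∑ j, ∑ k, δ j k * w j * (starRingEnd ℂ) (w k)) +
    γ * ((∑ j, ∑ k, X j k * w j * (starRingEnd ℂ) (w k)) * G⁻¹ -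
      (∑ j, ∑ k, Y j k * w j * (starRingEnd ℂ) (w k)) / G ^ 2) := by
  simp only [Finset.mul_sum, Finset.sum_mul, Finset.sum_div,
      ← Finset.sum_sub_distrib, ← Finset.sum_add_distrib]
  refine Finset.sum_congr rfl fun _ _ => Finset.sum_congr rfl fun _ _ => ?_
  ring

section hess
variable {n : ℕ} {ι : Type*} (t : Finset ι) (F : ι → (Fin n → ℂ) → ℂ)

lemma dzbar_form (hF : ∀ i, Differentiable ℂ (F i))
    (h0 : ∀ z, (∑ i ∈ t, ‖F i z‖ ^ 2) ≠ 0) (α β γ : ℝ) (k : Fin n) (z : Fin n → ℂ) :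
    dzbar (fun ζ => ((α + β * ∑ j, ‖ζ j‖ ^ 2 + γ * Real.log (∑ i ∈ t, ‖F i ζ‖ ^ 2) : ℝ) : ℂ)) k z
     = β * z k + γ * ((∑ i ∈ t, F i z * (starRingEnd ℂ) (fderiv ℂ (F i) z (Pi.single k 1))) *
        (∑ i ∈ t, F i z * (starRingEnd ℂ) (F i z))⁻¹) := by
  have hFR : ∀ i z, DifferentiableAt ℝ (F i) z := fun i z => ((hF i) z).restrictScalars ℝ
  have hFc : ∀ i z, DifferentiableAt ℝ (fun x => (starRingEnd ℂ) (F i x)) z := fun i z =>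
    (Complex.conjCLE : ℂ →L[ℝ] ℂ).differentiableAt.comp z (hFR i z)
  have hcd : ∀ (i : Fin n) z, DifferentiableAt ℂ (fun x : Fin n → ℂ => x i) z :=
    fun i z => by fun_prop
  have hc : ∀ (i : Fin n) z, DifferentiableAt ℝ (fun x : Fin n → ℂ => x i) z :=
    fun i z => by fun_prop
  have hcc : ∀ (i : Fin n) z, DifferentiableAt ℝ (fun x : Fin n → ℂ => (starRingEnd ℂ) (x i)) z :=
    fun i z => (Complex.conjCLE : ℂ →L[ℝ] ℂ).differentiableAt.comp z (hc i z)
  have hg : ∀ z, DifferentiableAt ℝ (fun x => ∑ i ∈ t, ‖F i x‖ ^ 2) z := fun z =>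
    DifferentiableAt.fun_sum fun i _ => (hFR i z).norm_sq ℝ
  have hlog : DifferentiableAt ℝ (fun x => ((Real.log (∑ i ∈ t, ‖F i x‖ ^ 2) : ℝ) : ℂ)) z :=
    Complex.ofRealCLM.differentiableAt.comp z ((hg z).log (h0 z))
  have hG : (fun x => ((∑ i ∈ t, ‖F i x‖ ^ 2 : ℝ) : ℂ)) =
      fun x => ∑ i ∈ t, F i x * (starRingEnd ℂ) (F i x) := by
    ext x; simp [Complex.mul_conj']
  have e : (fun ζ : Fin n → ℂ => ((α + β * ∑ j, ‖ζ j‖ ^ 2 + γ * Real.log (∑ i ∈ t, ‖F i ζ‖ ^ 2) : ℝ) : ℂ))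
     = fun ζ => ((α : ℂ) + β * (∑ j, ζ j * (starRingEnd ℂ) (ζ j))) +
        γ * ((Real.log (∑ i ∈ t, ‖F i ζ‖ ^ 2) : ℝ) : ℂ) := by
    ext ζ; push_cast; simp [Complex.mul_conj']
  have hs : DifferentiableAt ℝ (fun ζ : Fin n → ℂ => ∑ j, ζ j * (starRingEnd ℂ) (ζ j)) z :=
    DifferentiableAt.fun_sum fun i _ => (hc i z).fun_mul (hcc i z)
  rw [dzbar_eq, e, Dop_add ((differentiableAt_const _).fun_add (hs.const_mul _)) (hlog.const_mul _),
    Dop_add (differentiableAt_const _) (hs.const_mul _), Dop_const, Dop_const_mul _ hs,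
    Dop_const_mul _ hlog, Dop_log (hg z) (h0 z), hG, congrFun hG z,
    Dop_sum _ _ (fun i _ => (hc i z).fun_mul (hcc i z)),
    Dop_sum _ _ (fun i _ => (hFR i z).fun_mul (hFc i z))]
  congr 1
  · rw [zero_add]; congr 1
    rw [Finset.sum_eq_single k]
    · rw [Dop_mul (hc k z) (hcc k z), Dop_hol (hcd k z), Dop_conj (hcd k z), fderiv_coord]
      simp; norm_num
    · intro i _ hik
      rw [Dop_mul (hc i z) (hcc i z), Dop_hol (hcd i z), Dop_conj (hcd i z), fderiv_coord]
      simp [hik]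
    · simp
  · congr 2
    refine Finset.sum_congr rfl fun i _ => ?_
    rw [Dop_mul (hFR i z) (hFc i z), Dop_hol (hF i z), Dop_conj (hF i z)]
    simp; norm_num

lemma dzdzbar_form (hF : ∀ i, ContDiff ℂ 2 (F i))
    (h0 : ∀ z, (∑ i ∈ t, ‖F i z‖ ^ 2) ≠ 0) (α β γ : ℝ) (j k : Fin n) (z : Fin n → ℂ) :
    dz (dzbar (fun ζ => ((α + β * ∑ j, ‖ζ j‖ ^ 2 + γ * Real.log (∑ i ∈ t, ‖F i ζ‖ ^ 2) : ℝ) : ℂ)) k) j z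
     = β * (if k = j then 1 else 0) +
       γ * ((∑ i ∈ t, fderiv ℂ (F i) z (Pi.single j 1) *
              (starRingEnd ℂ) (fderiv ℂ (F i) z (Pi.single k 1))) *
            (∑ i ∈ t, F i z * (starRingEnd ℂ) (F i z))⁻¹ -
          (∑ i ∈ t, F i z * (starRingEnd ℂ) (fderiv ℂ (F i) z (Pi.single k 1))) *
          (∑ i ∈ t, fderiv ℂ (F i) z (Pi.single j 1) * (starRingEnd ℂ) (F i z)) /
            (∑ i ∈ t, F i z * (starRingEnd ℂ) (F i z)) ^ 2) := by
  have hFd : ∀ i, Differentiable ℂ (F i) := fun i => (hF i).differentiable (by norm_num)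
  have hFR : ∀ i z, DifferentiableAt ℝ (F i) z := fun i z => ((hFd i) z).restrictScalars ℝ
  have hFc : ∀ i z, DifferentiableAt ℝ (fun x => (starRingEnd ℂ) (F i x)) z := fun i z =>
    (Complex.conjCLE : ℂ →L[ℝ] ℂ).differentiableAt.comp z (hFR i z)
  have hA : ∀ i k, Differentiable ℂ (fun z => fderiv ℂ (F i) z (Pi.single k 1)) := fun i k => by
    have := ((hF i).fderiv_right (m := 1) (by norm_num)).differentiable (by norm_num)
    intro z
    exact (this z).clm_apply (differentiableAt_const _)
  have hAR : ∀ i k z, DifferentiableAt ℝ (fun z => fderiv ℂ (F i) z (Pi.single k 1)) z :=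
    fun i k z => ((hA i k) z).restrictScalars ℝ
  have hAc : ∀ i k z, DifferentiableAt ℝ
      (fun z => (starRingEnd ℂ) (fderiv ℂ (F i) z (Pi.single k 1))) z := fun i k z =>
    (Complex.conjCLE : ℂ →L[ℝ] ℂ).differentiableAt.comp z (hAR i k z)
  have hcd : ∀ (i : Fin n) z, DifferentiableAt ℂ (fun x : Fin n → ℂ => x i) z :=
    fun i z => by fun_prop
  have hc : ∀ (i : Fin n) z, DifferentiableAt ℝ (fun x : Fin n → ℂ => x i) z :=
    fun i z => by fun_prop
  have hG0 : (∑ i ∈ t, F i z * (starRingEnd ℂ) (F i z)) ≠ 0 := by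
    have := h0 z
    intro h
    apply this
    have h2 : ((∑ i ∈ t, ‖F i z‖ ^ 2 : ℝ) : ℂ) = 0 := by
      rw [← h]; simp [Complex.mul_conj']
    exact_mod_cast h2
  have hGd : DifferentiableAt ℝ (fun z => ∑ i ∈ t, F i z * (starRingEnd ℂ) (F i z)) z :=
    DifferentiableAt.fun_sum fun i _ => (hFR i z).fun_mul (hFc i z)
  have hN : DifferentiableAt ℝ (fun z => ∑ i ∈ t, F i z *
      (starRingEnd ℂ) (fderiv ℂ (F i) z (Pi.single k 1))) z :=
    DifferentiableAt.fun_sum fun i _ => (hFR i z).fun_mul (hAc i k z)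
  have hGi : DifferentiableAt ℝ (fun z => (∑ i ∈ t, F i z * (starRingEnd ℂ) (F i z))⁻¹) z :=
    hGd.inv hG0
  rw [funext (dzbar_form t F hFd h0 α β γ k), dz_eq,
    Dop_add ((hc k z).const_mul _) ((hN.fun_mul hGi).const_mul _), Dop_const_mul _ (hc k z),
    Dop_const_mul _ (hN.fun_mul hGi), Dop_mul hN hGi, Dop_inv hGd hG0,
    Dop_sum _ _ (fun i _ => (hFR i z).fun_mul (hFc i z)),
    Dop_sum _ _ (fun i _ => (hFR i z).fun_mul (hAc i k z)), Dop_hol (hcd k z), fderiv_coord]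
  have e1 : ∀ i, Dop (-Complex.I) (fun z => F i z *
      (starRingEnd ℂ) (fderiv ℂ (F i) z (Pi.single k 1))) j z =
      fderiv ℂ (F i) z (Pi.single j 1) * (starRingEnd ℂ) (fderiv ℂ (F i) z (Pi.single k 1)) := by
    intro i
    rw [Dop_mul (hFR i z) (hAc i k z), Dop_hol (hFd i z), Dop_conj (hA i k z)]
    simp; norm_num
  have e2 : ∀ i, Dop (-Complex.I) (fun z => F i z * (starRingEnd ℂ) (F i z)) j z =
      fderiv ℂ (F i) z (Pi.single j 1) * (starRingEnd ℂ) (F i z) := by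
    intro i
    rw [Dop_mul (hFR i z) (hFc i z), Dop_hol (hFd i z), Dop_conj (hFd i z)]
    simp; norm_num
  simp only [e1, e2]
  have e3 : (1 / 2 : ℂ) * (1 + -Complex.I * Complex.I) = 1 := by
    rw [neg_mul, Complex.I_mul_I]; norm_num
  rw [e3]
  ring

open scoped ComplexOrder in
lemma hess_ge (hF : ∀ i, ContDiff ℂ 2 (F i))
    (h0 : ∀ z, (∑ i ∈ t, ‖F i z‖ ^ 2) ≠ 0) (α β γ : ℝ) (hγ : 0 ≤ γ) (z w : Fin n → ℂ) :
    ((β * ∑ j, ‖w j‖ ^ 2 : ℝ) : ℂ) ≤ ∑ j : Fin n, ∑ k : Fin n,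
      dz (dzbar (fun ζ => ((α + β * ∑ j, ‖ζ j‖ ^ 2 +
        γ * Real.log (∑ i ∈ t, ‖F i ζ‖ ^ 2) : ℝ) : ℂ)) k) j z * w j * (starRingEnd ℂ) (w k) := by
  set a : ι → ℂ := fun i => ∑ j, fderiv ℂ (F i) z (Pi.single j 1) * w j with ha
  set G : ℝ := ∑ i ∈ t, ‖F i z‖ ^ 2 with hGdef
  have hGC : (∑ i ∈ t, F i z * (starRingEnd ℂ) (F i z)) = (G : ℂ) := by
    simp [hGdef, Complex.mul_conj']
  have hGpos : 0 < G := lt_of_le_of_ne (Finset.sum_nonneg fun i _ => by positivity) (h0 z).symm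
  have key : (∑ j : Fin n, ∑ k : Fin n,
      dz (dzbar (fun ζ => ((α + β * ∑ j, ‖ζ j‖ ^ 2 +
        γ * Real.log (∑ i ∈ t, ‖F i ζ‖ ^ 2) : ℝ) : ℂ)) k) j z * w j * (starRingEnd ℂ) (w k)) =
      ((β * ∑ j, ‖w j‖ ^ 2 + γ * ((∑ i ∈ t, ‖a i‖ ^ 2) * G⁻¹ -
        ‖∑ i ∈ t, a i * (starRingEnd ℂ) (F i z)‖ ^ 2 / G ^ 2) : ℝ) : ℂ) := by
    simp only [dzdzbar_form t F hF h0]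
    rw [hGC]
    have s1 : (∑ j : Fin n, ∑ k : Fin n, (if k = j then (1 : ℂ) else 0) * w j *
        (starRingEnd ℂ) (w k)) = ((∑ j, ‖w j‖ ^ 2 : ℝ) : ℂ) := by
      simp [Complex.mul_conj']
    have s2 : (∑ j : Fin n, ∑ k : Fin n, (∑ i ∈ t, fderiv ℂ (F i) z (Pi.single j 1) *
              (starRingEnd ℂ) (fderiv ℂ (F i) z (Pi.single k 1))) * w j *
        (starRingEnd ℂ) (w k)) = ((∑ i ∈ t, ‖a i‖ ^ 2 : ℝ) : ℂ) := by
      push_cast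
      have r2 : ∀ i, ((‖a i‖ : ℂ)) ^ 2 = ∑ j : Fin n, ∑ k : Fin n, fderiv ℂ (F i) z (Pi.single j 1) *
              (starRingEnd ℂ) (fderiv ℂ (F i) z (Pi.single k 1)) * w j * (starRingEnd ℂ) (w k) := by
        intro i
        rw [← Complex.mul_conj', ha, map_sum, Finset.sum_mul_sum]
        refine Finset.sum_congr rfl fun _ _ => Finset.sum_congr rfl fun _ _ => ?_
        rw [map_mul]; ring
      simp only [r2, Finset.sum_mul]
      rw [Finset.sum_comm (s := t)]
      refine Finset.sum_congr rfl fun _ _ => ?_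
      rw [Finset.sum_comm (s := t)]
    have s3 : (∑ j : Fin n, ∑ k : Fin n,
        ((∑ i ∈ t, F i z * (starRingEnd ℂ) (fderiv ℂ (F i) z (Pi.single k 1))) *
          (∑ i ∈ t, fderiv ℂ (F i) z (Pi.single j 1) * (starRingEnd ℂ) (F i z))) * w j *
        (starRingEnd ℂ) (w k)) = ((‖∑ i ∈ t, a i * (starRingEnd ℂ) (F i z)‖ ^ 2 : ℝ) : ℂ) := by
      have r1 : ∑ i ∈ t, a i * (starRingEnd ℂ) (F i z) = ∑ j : Fin n,
          (∑ i ∈ t, fderiv ℂ (F i) z (Pi.single j 1) * (starRingEnd ℂ) (F i z)) * w j := by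
        simp only [ha, Finset.sum_mul]
        rw [Finset.sum_comm]
        exact Finset.sum_congr rfl fun _ _ => Finset.sum_congr rfl fun _ _ => by ring
      push_cast
      rw [← Complex.mul_conj', r1, map_sum, Finset.sum_mul_sum]
      refine Finset.sum_congr rfl fun _ _ => Finset.sum_congr rfl fun _ _ => ?_
      simp only [map_mul, map_sum, Complex.conj_conj]
      simp only [mul_comm (F _ z)]
      ring
    push_cast at s1 s2 s3 ⊢
    rw [← s1, ← s2, ← s3]
    exact sum_aux _ _ _ w β γ G
  rw [key, Complex.real_le_real]
  have hcs := cs_aux t a (fun i => F i z)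
  have : 0 ≤ (∑ i ∈ t, ‖a i‖ ^ 2) * G⁻¹ -
        ‖∑ i ∈ t, a i * (starRingEnd ℂ) (F i z)‖ ^ 2 / G ^ 2 := by
    rw [sub_nonneg, div_le_iff₀ (by positivity)]
    calc _ ≤ _ := hcs
      _ = _ := by rw [← hGdef]; field_simp
  nlinarith [mul_nonneg hγ this]
end hess

lemma penal {X : Type*} [TopologicalSpace X] {K : Set X} (hK : IsCompact K) {f g : X → ℝ}
    (hf : Continuous f) (hg : Continuous g) {ε : ℝ} (hg0 : ∀ x ∈ K, g x ≤ 0)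
    (h : ∀ x ∈ K, g x = 0 → f x < ε) : ∃ T : ℝ, ∀ x ∈ K, f x + T * g x < ε := by
  have hK' : IsCompact (K ∩ {x | ε ≤ f x}) := hK.inter_right (isClosed_le continuous_const hf)
  rcases (K ∩ {x | ε ≤ f x}).eq_empty_or_nonempty with he | hne
  · refine ⟨0, fun x hx => ?_⟩
    by_contra hcon
    have : x ∈ K ∩ {x | ε ≤ f x} := ⟨hx, by
      have : ε ≤ f x := by linarith
      exact this⟩
    rw [he] at this; exact this
  · obtain ⟨x0, hx0, hmax⟩ := hK'.exists_isMaxOn hne hg.continuousOn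
    obtain ⟨x1, hx1, hmax1⟩ := hK'.exists_isMaxOn hne hf.continuousOn
    have hfx0 : ε ≤ f x0 := hx0.2
    have hfx1 : ε ≤ f x1 := hx1.2
    have hneg : g x0 < 0 := lt_of_le_of_ne (hg0 x0 hx0.1) fun h0 =>
      absurd (h x0 hx0.1 h0) (not_lt.2 hfx0)
    have hT0 : 0 ≤ (f x1 - ε + 1) / (-g x0) := div_nonneg (by linarith) (by linarith)
    have hTe : (f x1 - ε + 1) / (-g x0) * g x0 = -(f x1 - ε + 1) := by
      field_simp [hneg.ne]
    refine ⟨(f x1 - ε + 1) / (-g x0), fun x hx => ?_⟩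
    by_cases hfx : ε ≤ f x
    · have h1 : g x ≤ g x0 := hmax ⟨hx, hfx⟩
      have h2 : f x ≤ f x1 := hmax1 ⟨hx, hfx⟩
      have h3 := mul_le_mul_of_nonneg_left h1 hT0
      linarith
    · have := mul_nonpos_of_nonneg_of_nonpos hT0 (hg0 x hx)
      linarith [not_le.1 hfx]

lemma totally_real {n : ℕ} (S : Submodule ℝ (Fin n → ℂ))
    (hS : ∀ b ∈ S, Complex.I • b ∈ S → b = 0) :
    ∃ Q : (Fin n → ℂ) → ℂ, ContDiff ℂ ⊤ Q ∧ Q 0 = 0 ∧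
      ∀ v ∈ S, (Q v).re ≤ 0 ∧ ((Q v).re = 0 → v = 0) := by
  let b := Module.finBasis ℝ S
  have hli : LinearIndependent ℂ (fun i => (b i : Fin n → ℂ)) := by
    rw [Fintype.linearIndependent_iff]
    intro g hg
    set x : S := ∑ i, (g i).re • b i with hx
    set y : S := ∑ i, (g i).im • b i with hy
    have hxy : (x : Fin n → ℂ) + Complex.I • (y : Fin n → ℂ) = 0 := by
      rw [← hg, hx, hy]
      simp only [Submodule.coe_sum, Submodule.coe_smul, Finset.smul_sum, ← Finset.sum_add_distrib]
      refine Finset.sum_congr rfl fun i _ => ?_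
      ext k
      simp only [Pi.add_apply, Pi.smul_apply, smul_eq_mul, Complex.real_smul]
      conv_rhs => rw [← Complex.re_add_im (g i)]
      ring
    have hy0 : (y : Fin n → ℂ) = 0 := by
      apply hS _ y.2
      have : Complex.I • (y : Fin n → ℂ) = ((-x : S) : Fin n → ℂ) := by
        rw [Submodule.coe_neg]; exact eq_neg_of_add_eq_zero_right hxy
      rw [this]; exact (-x).2
    have hx0 : (x : Fin n → ℂ) = 0 := by simpa [hy0] using hxy
    have hx1 : x = 0 := Subtype.ext hx0
    have hy1 : y = 0 := Subtype.ext hy0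
    have h1 := Fintype.linearIndependent_iff.1 b.linearIndependent _ (hx.symm.trans hx1)
    have h2 := Fintype.linearIndependent_iff.1 b.linearIndependent _ (hy.symm.trans hy1)
    intro i
    exact Complex.ext (h1 i) (h2 i)
  let B := Module.Basis.sumExtend hli
  have : Finite (Fin (Module.finrank ℝ S) ⊕ Module.Basis.sumExtendIndex hli) :=
    Module.Finite.finite_basis B
  let _ := Fintype.ofFinite (Fin (Module.finrank ℝ S) ⊕ Module.Basis.sumExtendIndex hli)
  have hreal : ∀ v ∈ S, ∀ i, (B.coord i v).im = 0 := by
    intro v hv i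
    have h1 : v = ∑ i, (b.repr ⟨v, hv⟩ i : ℂ) • B (Sum.inl i) := by
      have := congrArg (Subtype.val) (b.sum_repr ⟨v, hv⟩)
      simp only [Submodule.coe_sum, Submodule.coe_smul] at this
      refine this.symm.trans ?_
      refine Finset.sum_congr rfl fun i _ => ?_
      have : B (Sum.inl i) = b i := by
        simp [B, Module.Basis.sumExtend]
        rfl
      rw [this]; ext k; simp
    rw [h1, map_sum]
    simp only [map_smul, Complex.im_sum, Module.Basis.coord_apply, Module.Basis.repr_self, smul_eq_mul]
    refine Finset.sum_eq_zero fun j _ => ?_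
    rw [Finsupp.single_apply]; split_ifs <;> simp
  refine ⟨fun v => - ∑ i, (B.coord i v) ^ 2, ?_, by simp, ?_⟩
  · refine ContDiff.neg (ContDiff.sum fun i _ => ContDiff.pow ?_ 2)
    exact (LinearMap.toContinuousLinearMap (B.coord i)).contDiff
  · intro v hv
    have e : (- ∑ i, (B.coord i v) ^ 2).re = - ∑ i, (B.coord i v).re ^ 2 := by
      rw [Complex.neg_re, Complex.re_sum]
      congr 1
      refine Finset.sum_congr rfl fun i _ => ?_
      rw [pow_two, Complex.mul_re, hreal v hv i]; ring
    have hnn : 0 ≤ ∑ i, (B.coord i v).re ^ 2 := Finset.sum_nonneg fun i _ => sq_nonneg _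
    refine ⟨by simp only [e]; linarith, fun h0 => ?_⟩
    simp only [e] at h0
    have h1 : ∑ i, (B.coord i v).re ^ 2 = 0 := by linarith
    rw [Finset.sum_eq_zero_iff_of_nonneg (fun i _ => sq_nonneg _)] at h1
    refine B.forall_coord_eq_zero_iff.1 fun i => Complex.ext ?_ (hreal v hv i)
    simpa using h1 i (Finset.mem_univ i)

lemma disc_of_convex {n : ℕ} {A : Set (Fin n → ℂ)} (hA : Convex ℝ A) (hne : A.Nonempty)
    {b : Fin n → ℂ} (hb : b ∈ vectorSpan ℝ A) (hIb : Complex.I • b ∈ vectorSpan ℝ A)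
    (hb0 : b ≠ 0) : ∃ a c : Fin n → ℂ, c ≠ 0 ∧ ∀ ζ : ℂ, ‖ζ‖ < 1 → a + ζ • c ∈ A := by
  obtain ⟨a, ha⟩ := Set.Nonempty.intrinsicInterior hA hne
  obtain ⟨y, hy, rfl⟩ := mem_intrinsicInterior.1 ha
  rw [mem_interior_iff_mem_nhds, Metric.mem_nhds_iff] at hy
  obtain ⟨r, hr, hball⟩ := hy
  have hnb : 0 < ‖b‖ := norm_pos_iff.2 hb0
  refine ⟨y, ((r / ‖b‖ : ℝ) : ℂ) • b, ?_, fun ζ hζ => ?_⟩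
  · refine smul_ne_zero ?_ hb0
    exact_mod_cast (by positivity : r / ‖b‖ ≠ 0)
  · have hmem : ∀ c : ℂ, c • b ∈ vectorSpan ℝ A := by
      intro c
      have : c • b = c.re • b + c.im • (Complex.I • b) := by
        ext k
        simp only [Pi.add_apply, Pi.smul_apply, smul_eq_mul, Complex.real_smul]
        conv_lhs => rw [← Complex.re_add_im c]
        ring
      rw [this]
      exact Submodule.add_mem _ (Submodule.smul_mem _ _ hb) (Submodule.smul_mem _ _ hIb)
    have hin : (y : Fin n → ℂ) + ζ • ((r / ‖b‖ : ℝ) : ℂ) • b ∈ affineSpan ℝ A := by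
      rw [smul_smul, add_comm]
      refine AffineSubspace.vadd_mem_of_mem_direction ?_ y.2
      rw [direction_affineSpan]; exact hmem _
    have := @hball ⟨_, hin⟩ (by
      rw [Metric.mem_ball, Subtype.dist_eq, dist_eq_norm]
      simp only [add_sub_cancel_left]
      rw [norm_smul, norm_smul, Complex.norm_real, Real.norm_of_nonneg (by positivity),
        div_mul_cancel₀ _ hnb.ne']
      nlinarith)
    exact this

lemma peak {n : ℕ} {Ω : Set (Fin n → ℂ)}
    (hΩ_open : IsOpen Ω) (hΩ_bdd : Bornology.IsBounded Ω) (hΩ_conv : Convex ℝ Ω)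
    (hnodisc : ¬ ∃ (a b : Fin n → ℂ), b ≠ 0 ∧
      ∀ ζ : ℂ, ‖ζ‖ < 1 → a + ζ • b ∈ frontier Ω) {p : Fin n → ℂ} (hp : p ∈ frontier Ω)
    {ε : ℝ} (hε : 0 < ε) :
    ∃ H : (Fin n → ℂ) → ℂ, ContDiff ℂ ⊤ H ∧ ∑ j, ‖p j‖ ^ 2 + (H p).re = 0 ∧
      ∀ z ∈ frontier Ω, ∑ j, ‖z j‖ ^ 2 + (H z).re < ε := by
  have hfr : frontier Ω = closure Ω \ Ω := hΩ_open.frontier_eq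
  have hcpt : IsCompact (closure Ω) := hΩ_bdd.isCompact_closure
  have hpc : p ∈ closure Ω := frontier_subset_closure hp
  have hpΩ : p ∉ Ω := by rw [hfr] at hp; exact hp.2
  obtain ⟨L, hL⟩ := RCLike.geometric_hahn_banach_open_point (𝕜 := ℂ) hΩ_conv hΩ_open hpΩ
  have hLc : ∀ z ∈ closure Ω, (L (z - p)).re ≤ 0 := by
    intro z hz
    have : closure Ω ⊆ {z | (L (z - p)).re ≤ 0} := by
      refine closure_minimal (fun x hx => ?_) ?_
      · have := hL x hx
        simp only [Set.mem_ofPred_eq, map_sub, Complex.sub_re]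
        simp at this; linarith
      · exact isClosed_le (by fun_prop) continuous_const
    exact this hz
  set A : Set (Fin n → ℂ) := closure Ω ∩ {z | L (z - p) = 0} with hA
  have hAcl : IsClosed {z | L (z - p) = 0} := isClosed_eq (by fun_prop) continuous_const
  have hAc : IsCompact A := hcpt.inter_right hAcl
  have hAconv : Convex ℝ A := by
    refine hΩ_conv.closure.inter ?_
    intro x hx y hy s t _ _ hst
    simp only [Set.mem_ofPred_eq, map_sub, sub_eq_zero] at hx hy ⊢
    rw [map_add, L.map_smul_of_tower, L.map_smul_of_tower, hx, hy, ← add_smul, hst, one_smul]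
  have hpA : p ∈ A := ⟨hpc, by simp⟩
  have hAf : A ⊆ frontier Ω := by
    intro z hz
    rw [hfr]
    refine ⟨hz.1, fun hzΩ => ?_⟩
    have h1 := hL z hzΩ
    have h2 : L (z - p) = 0 := hz.2
    rw [map_sub, sub_eq_zero] at h2
    rw [h2] at h1; exact lt_irrefl _ h1
  obtain ⟨Q, hQ, hQ0, hQS⟩ := totally_real (vectorSpan ℝ A) (by
    intro b hb hIb
    by_contra hb0
    obtain ⟨a, c, hc, h⟩ := disc_of_convex hAconv ⟨p, hpA⟩ hb hIb hb0
    exact hnodisc ⟨a, c, hc, fun ζ hζ => hAf (h ζ hζ)⟩)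
  have hQc := hQ.continuous
  have hQz : ∀ z ∈ A, (Q (z - p)).re ≤ 0 ∧ ((Q (z - p)).re = 0 → z = p) := by
    intro z hz
    have := hQS (z - p) (vsub_mem_vectorSpan ℝ hz hpA)
    exact ⟨this.1, fun h => sub_eq_zero.1 (this.2 h)⟩
  obtain ⟨T', hT'⟩ := penal (f := fun z => ∑ j, ‖z j - p j‖ ^ 2) (g := fun z => (Q (z - p)).re)
    (ε := ε) hAc (by fun_prop) (by fun_prop) (fun z hz => (hQz z hz).1) (by
      intro z hz h0
      rw [(hQz z hz).2 h0]; simpa using hε)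
  obtain ⟨C, hC⟩ := hcpt.exists_bound_of_continuousOn (f := fun z => L (z - p)) (by fun_prop)
  have hC0 : 0 ≤ C := (norm_nonneg _).trans (hC p hpc)
  set c : ℝ := 1 / (2 * (C + 1)) with hc
  have hcpos : 0 < c := by positivity
  have hcC : c * C ≤ 1 / 2 := by
    rw [hc]; rw [div_mul_eq_mul_div, div_le_div_iff₀ (by positivity) (by norm_num)]; linarith
  have hg1 : ∀ z ∈ closure Ω, (L (z - p) + c * L (z - p) ^ 2).re ≤
      (L (z - p)).re / 2 - c * (L (z - p)).im ^ 2 := by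
    intro z hz
    have h1 := hLc z hz
    have h2 := (Complex.abs_re_le_norm _).trans (hC z hz)
    rw [abs_of_nonpos h1] at h2
    have h3 : (L (z - p) + c * L (z - p) ^ 2).re =
      (L (z - p)).re + c * ((L (z - p)).re ^ 2 - (L (z - p)).im ^ 2) := by
      simp [pow_two]
    rw [h3]
    have h4 : c * (-(L (z - p)).re) ≤ 1 / 2 := (mul_le_mul_of_nonneg_left h2 hcpos.le).trans hcC
    nlinarith
  obtain ⟨T, hT⟩ := penal
    (f := fun z => ∑ j, ‖z j - p j‖ ^ 2 + T' * (Q (z - p)).re)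
    (g := fun z => (L (z - p) + c * L (z - p) ^ 2).re)
    (ε := ε) hcpt (by fun_prop) (by fun_prop) (by
      intro z hz
      have := hg1 z hz
      have := hLc z hz
      nlinarith [mul_nonneg hcpos.le (sq_nonneg (L (z - p)).im)]) (by
      intro z hz h0
      refine hT' z ⟨hz, ?_⟩
      have h1 := hg1 z hz
      have h2 := hLc z hz
      have h3 := mul_nonneg hcpos.le (sq_nonneg (L (z - p)).im)
      rw [h0] at h1
      refine Complex.ext ?_ ?_
      · simp only [Complex.zero_re]; linarith
      · have h4 : c * (L (z - p)).im ^ 2 = 0 := by linarith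
        simpa [hcpos.ne'] using h4)
  have hsq : ∀ z : Fin n → ℂ, ∑ j, ‖z j - p j‖ ^ 2 = ∑ j, ‖z j‖ ^ 2 +
      (∑ j, ((‖p j‖ ^ 2 : ℝ) - 2 * (starRingEnd ℂ) (p j) * z j : ℂ)).re := by
    intro z
    rw [Complex.re_sum, ← Finset.sum_add_distrib]
    refine Finset.sum_congr rfl fun j _ => ?_
    simp only [← Complex.normSq_eq_norm_sq, Complex.normSq_apply]
    simp; ring
  refine ⟨fun z => (∑ j, ((‖p j‖ ^ 2 : ℝ) - 2 * (starRingEnd ℂ) (p j) * z j : ℂ)) +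
    T' * Q (z - p) + T * (L (z - p) + c * L (z - p) ^ 2), ?_, ?_, ?_⟩
  · fun_prop
  · have := hsq p
    simp only [sub_self, hQ0, map_zero, norm_zero] at this ⊢
    simp at this ⊢
    linarith
  · intro z hz
    have h1 := hT z (frontier_subset_closure hz)
    simp only [hsq z] at h1
    rw [Complex.add_re, Complex.add_re, Complex.re_ofReal_mul, Complex.re_ofReal_mul]
    linarith

open scoped ComplexOrder in
/-- Let `Ω ⊂ ℂⁿ` be a bounded convex open set whose boundary contains no
nontrivial affine analytic disc.  Then `∂Ω` satisfies property `(P₁)`: for every `M > 0`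
there exist an open neighborhood `U` of `∂Ω` and a `C^∞` function `λ : U → ℝ` with
`0 ≤ λ ≤ 1` whose complex Hessian is bounded below by `M` times the identity on `U`. -/
theorem stmt1 {n : ℕ} (Ω : Set (Fin n → ℂ))
    (hΩ_open : IsOpen Ω) (hΩ_bdd : Bornology.IsBounded Ω) (hΩ_conv : Convex ℝ Ω)
    (hnodisc : ¬ ∃ (a b : Fin n → ℂ), b ≠ 0 ∧
      ∀ ζ : ℂ, ‖ζ‖ < 1 → a + ζ • b ∈ frontier Ω) :
    ∀ M : ℝ, 0 < M →
      ∃ U : Set (Fin n → ℂ), IsOpen U ∧ frontier Ω ⊆ U ∧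
        ∃ lam : (Fin n → ℂ) → ℝ,
          ContDiffOn ℝ (⊤ : ℕ∞) (fun z => (lam z : ℂ)) U ∧
          (∀ z ∈ U, 0 ≤ lam z ∧ lam z ≤ 1) ∧
          ∀ z ∈ U, ∀ w : Fin n → ℂ,
            ((M * ∑ j, ‖w j‖ ^ 2 : ℝ) : ℂ) ≤
              ∑ j : Fin n, ∑ k : Fin n,
                dz (dzbar (fun ζ => (lam ζ : ℂ)) k) j z * w j * (starRingEnd ℂ) (w k) := by
  intro M hM
  rcases (frontier Ω).eq_empty_or_nonempty with he | hne
  · exact ⟨∅, isOpen_empty, by rw [he], fun _ => 0, contDiffOn_const, by simp, by simp⟩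
  set ε : ℝ := 1 / (3 * M) with hεd
  have hε : 0 < ε := by positivity
  have hMε : M * (3 * ε) = 1 := by rw [hεd]; field_simp
  have hex : ∀ p : Fin n → ℂ, ∃ H : (Fin n → ℂ) → ℂ, ContDiff ℂ ⊤ H ∧ (p ∈ frontier Ω →
      (∑ j, ‖p j‖ ^ 2 + (H p).re = 0 ∧
      ∀ z ∈ frontier Ω, ∑ j, ‖z j‖ ^ 2 + (H z).re < ε)) := by
    intro p
    by_cases hp : p ∈ frontier Ω
    · obtain ⟨H, h1, h2⟩ := peak hΩ_open hΩ_bdd hΩ_conv hnodisc hp hε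
      exact ⟨H, h1, fun _ => h2⟩
    · exact ⟨fun _ => 0, contDiff_const, fun h => absurd h hp⟩
  choose H hH hpk using hex
  have hHc : ∀ p, Continuous (H p) := fun p => (hH p).continuous
  have hcpt : IsCompact (frontier Ω) :=
    hΩ_bdd.isCompact_closure.of_isClosed_subset isClosed_frontier frontier_subset_closure
  obtain ⟨t, htK, htcov⟩ := hcpt.elim_nhds_subcover
    (fun p => {z | -ε < ∑ j, ‖z j‖ ^ 2 + (H p z).re}) (by
      intro p hp
      have hHp := hHc p
      refine (isOpen_lt continuous_const (by fun_prop)).mem_nhds ?_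
      have := (hpk p hp).1
      simp only [Set.mem_ofPred_eq, this]; linarith)
  have htne : t.Nonempty := by
    obtain ⟨p, hp⟩ := hne
    have := htcov hp
    simp only [Set.mem_iUnion] at this
    obtain ⟨q, hq, _⟩ := this
    exact ⟨q, hq⟩
  have hm : (1 : ℝ) ≤ t.card := by exact_mod_cast htne.card_pos
  set N : ℝ := (Real.log t.card + 1) / ε with hN
  have hlogm : 0 ≤ Real.log t.card := Real.log_nonneg hm
  have hNpos : 0 < N := by positivity
  have hNε : N * ε = Real.log t.card + 1 := by rw [hN]; field_simp
  set F : (Fin n → ℂ) → (Fin n → ℂ) → ℂ := fun p z => Complex.exp (((N / 2 : ℝ) : ℂ) * H p z) with hF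
  have hFt : ∀ p, ContDiff ℂ ⊤ (F p) := fun p => (contDiff_const.mul (hH p)).cexp
  have hFn : ∀ p z, ‖F p z‖ ^ 2 = Real.exp (N * (H p z).re) := by
    intro p z
    rw [hF]; simp only [Complex.norm_exp, Complex.re_ofReal_mul]
    rw [← Real.exp_nat_mul]; congr 1; push_cast; ring
  have hGpos : ∀ z, 0 < ∑ p ∈ t, ‖F p z‖ ^ 2 := fun z =>
    Finset.sum_pos (fun p _ => by rw [hFn]; exact Real.exp_pos _) htne
  have hsm : ContDiff ℝ (⊤ : ℕ∞) (fun z : Fin n → ℂ => M * ε + M * ∑ j, ‖z j‖ ^ 2 +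
      M / N * Real.log (∑ p ∈ t, ‖F p z‖ ^ 2)) := by
    have h1 : ∀ p, ContDiff ℝ (⊤ : ℕ∞) (fun z => ‖F p z‖ ^ 2) := fun p =>
      (((hFt p).restrict_scalars ℝ).of_le le_top).norm_sq ℝ
    have h2 : ∀ j : Fin n, ContDiff ℝ (⊤ : ℕ∞) (fun z : Fin n → ℂ => ‖z j‖ ^ 2) := fun j =>
      (contDiff_apply ℝ ℂ j).norm_sq ℝ
    exact (contDiff_const.add (contDiff_const.mul (ContDiff.sum fun j _ => h2 j))).add
      (contDiff_const.mul ((ContDiff.sum fun p _ => h1 p).log fun z => (hGpos z).ne'))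
  refine ⟨{z | 0 < M * ε + M * ∑ j, ‖z j‖ ^ 2 + M / N * Real.log (∑ p ∈ t, ‖F p z‖ ^ 2)} ∩
    {z | M * ε + M * ∑ j, ‖z j‖ ^ 2 + M / N * Real.log (∑ p ∈ t, ‖F p z‖ ^ 2) < 1},
    (isOpen_lt continuous_const hsm.continuous).inter
      (isOpen_lt hsm.continuous continuous_const), ?_,
    fun z => M * ε + M * ∑ j, ‖z j‖ ^ 2 + M / N * Real.log (∑ p ∈ t, ‖F p z‖ ^ 2), ?_, ?_, ?_⟩
  · intro z hz
    set ρ := ∑ j, ‖z j‖ ^ 2 with hρ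
    have e : M * ε + M * ρ + M / N * Real.log (∑ p ∈ t, ‖F p z‖ ^ 2) =
      M / N * (N * ε + N * ρ + Real.log (∑ p ∈ t, ‖F p z‖ ^ 2)) := by field_simp
    have hMN : 0 < M / N := by positivity
    have hlow : -(N * ε) - N * ρ < Real.log (∑ p ∈ t, ‖F p z‖ ^ 2) := by
      rw [Real.lt_log_iff_exp_lt (hGpos z)]
      have := htcov hz
      simp only [Set.mem_iUnion] at this
      obtain ⟨q, hq, hq2⟩ := this
      have hq2 : -ε < ρ + (H q z).re := hq2
      calc _ < Real.exp (N * (H q z).re) := by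
              rw [Real.exp_lt_exp]; nlinarith
        _ = ‖F q z‖ ^ 2 := (hFn q z).symm
        _ ≤ _ := Finset.single_le_sum (f := fun p => ‖F p z‖ ^ 2) (fun _ _ => by positivity) hq
    have hup : Real.log (∑ p ∈ t, ‖F p z‖ ^ 2) ≤ Real.log t.card + (N * ε - N * ρ) := by
      rw [← Real.log_exp (N * ε - N * ρ), ← Real.log_mul (by positivity) (Real.exp_pos _).ne']
      refine Real.log_le_log (hGpos z) ?_
      rw [← nsmul_eq_mul]
      refine Finset.sum_le_card_nsmul _ _ _ fun p hp => ?_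
      rw [hFn, Real.exp_le_exp]
      have := (hpk p (htK p hp)).2 z hz
      nlinarith
    refine ⟨?_, ?_⟩
    · simp only [Set.mem_ofPred_eq, ← hρ]
      rw [e]
      exact mul_pos hMN (by linarith)
    · simp only [Set.mem_ofPred_eq, ← hρ]
      rw [e]
      calc _ < M / N * (3 * (N * ε)) := mul_lt_mul_of_pos_left (by linarith) hMN
        _ = M * (3 * ε) := by field_simp
        _ = 1 := hMε
  · exact (Complex.ofRealCLM.contDiff.comp hsm).contDiffOn
  · exact fun z hz => ⟨(show _ < _ from hz.1).le, (show _ < _ from hz.2).le⟩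
  · intro z _ w
    exact hess_ge t F (fun p => (hFt p).of_le le_top) (fun z => (hGpos z).ne') _ M (M / N)
      (by positivity) z w
end
end

section
/- Let A be an n×n complex Hermitian matrix, let 1 ≤ q ≤ n, and let M ≥ 0 be a constant. Then H_q(A)(u) ≥ M·|u|² for every alternating q-array u if and only if for every orthonormal family t¹, …, t^q of vectors in ℂⁿ one has ∑_{i=1}^q Q_A(tⁱ) ≥ M. (This is the equivalence (1) ⇔ (2) of Lemma 5.) -/
open scoped ComplexOrder Classical

namespace HQ

lemma prod_ite {ι α : Type*} [Fintype ι] [DecidableEq α] (a b : ι → α) :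
    ∏ i, (if a i = b i then (1:ℂ) else 0) = if a = b then 1 else 0 := by
  split_ifs with h
  · subst h; simp
  · obtain ⟨i, hi⟩ := Function.ne_iff.mp h
    exact Finset.prod_eq_zero (Finset.mem_univ i) (by simp [hi])

def Alt {n q : ℕ} (u : (Fin q → Fin n) → ℂ) : Prop :=
  ∀ (J : Fin q → Fin n) (σ : Equiv.Perm (Fin q)),
            u (J ∘ σ) = ((Equiv.Perm.sign σ : ℤ) : ℂ) * u J

lemma Alt.zero {n q : ℕ} {u : (Fin q → Fin n) → ℂ} (h : Alt u) (J : Fin q → Fin n)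
    (hJ : ¬ Function.Injective J) : u J = 0 := by
  simp only [Function.Injective, not_forall] at hJ
  obtain ⟨a, b, hab, hne⟩ := hJ
  have h1 := h J (Equiv.swap a b)
  have h2 : J ∘ (Equiv.swap a b) = J := by
    funext x
    simp only [Function.comp, Equiv.swap_apply_def]
    split_ifs with h h'
    · rw [h, hab]
    · rw [h', hab]
    · rfl
  rw [h2, Equiv.Perm.sign_swap hne] at h1
  simp at h1
  exact self_eq_neg.mp h1

lemma sgn_mul {q : ℕ} (σ : Equiv.Perm (Fin q)) :
    ((Equiv.Perm.sign σ : ℤ) : ℂ) * ((Equiv.Perm.sign σ : ℤ) : ℂ) = 1 := by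
  rcases Int.units_eq_one_or (Equiv.Perm.sign σ) with h | h <;> simp [h]

lemma sum_symm {n q : ℕ} (f : (Fin q → Fin n) → ℂ)
    (hs : ∀ J (σ : Equiv.Perm (Fin q)), f (J ∘ σ) = f J)
    (h0 : ∀ J, ¬ Function.Injective J → f J = 0) :
    ∑ J, f J = (q.factorial : ℂ) *
      ∑ J ∈ Finset.univ.filter (fun J : Fin q → Fin n => StrictMono J), f J := by
  have h1 : ∑ J, f J = ∑ J ∈ Finset.univ.filter (fun J : Fin q → Fin n => Function.Injective J), f J := by
    rw [Finset.sum_filter]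
    refine Finset.sum_congr rfl fun J _ => ?_
    split_ifs with h
    · rfl
    · exact h0 J h
  have h2 : ∑ p ∈ (Finset.univ.filter (fun J : Fin q → Fin n => StrictMono J)) ×ˢ
      (Finset.univ : Finset (Equiv.Perm (Fin q))), f p.1 =
      ∑ J ∈ Finset.univ.filter (fun J : Fin q → Fin n => Function.Injective J), f J := by
    refine Finset.sum_bij (fun p _ => p.1 ∘ p.2) ?_ ?_ ?_ ?_
    · rintro ⟨J, σ⟩ h
      simp at h ⊢
      exact h.injective
    · rintro ⟨J, σ⟩ h ⟨J', σ'⟩ h' he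
      simp at h h' he
      have hr : Set.range J = Set.range J' := by
        have := congrArg Set.range he
        rwa [Set.range_comp, Set.range_comp, σ.surjective.range_eq, σ'.surjective.range_eq,
          Set.image_univ, Set.image_univ] at this
      have hJ : J = J' := (StrictMono.range_inj h h').mp hr
      subst hJ
      have : σ = σ' := Equiv.ext fun x => h.injective (congrFun he x)
      rw [this]
    · intro J hJ
      simp at hJ
      refine ⟨(J ∘ Tuple.sort J, (Tuple.sort J)⁻¹), ?_, ?_⟩
      · simp only [Finset.mem_product, Finset.mem_filter, Finset.mem_univ, true_and, and_true]
        exact (Tuple.monotone_sort J).strictMono_of_injective (hJ.comp (Equiv.injective _))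
      · funext x; simp
    · rintro ⟨J, σ⟩ h
      exact (hs J σ).symm
  rw [h1, ← h2, Finset.sum_product_right]
  simp [Fintype.card_perm]

noncomputable def F {n q : ℕ} (B : Fin q → Matrix (Fin n) (Fin n) ℂ) (u : (Fin q → Fin n) → ℂ) : ℂ :=
  ∑ I, ∑ I', u I * (starRingEnd ℂ) (u I') * ∏ i, B i (I i) (I' i)

lemma F_one {n q : ℕ} (u : (Fin q → Fin n) → ℂ) :
    F (fun _ => 1) u = ∑ J, ((‖u J‖^2 : ℝ) : ℂ) := by
  unfold F
  simp only [Matrix.one_apply, prod_ite]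
  simp [Complex.mul_conj']

lemma F_one_alt {n q : ℕ} {u : (Fin q → Fin n) → ℂ} (h : Alt u) :
    F (fun _ => 1) u = (q.factorial : ℂ) *
      ∑ J ∈ Finset.univ.filter (fun J : Fin q → Fin n => StrictMono J), ((‖u J‖^2 : ℝ) : ℂ) := by
  rw [F_one, sum_symm]
  · intro J σ
    rw [h J σ, norm_mul]
    rcases Int.units_eq_one_or (Equiv.Perm.sign σ) with h | h <;> simp [h]
  · intro J hJ
    simp [h.zero J hJ]

lemma sum_cons {n m : ℕ} (f : (Fin (m+1) → Fin n) → ℂ) :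
    ∑ J, f J = ∑ j : Fin n, ∑ K : Fin m → Fin n, f (Fin.cons j K) := by
  rw [← Fintype.sum_prod_type', ← Equiv.sum_comp (Fin.consEquiv (fun _ => Fin n))]
  rfl

lemma F_cons {n m : ℕ} (A : Matrix (Fin n) (Fin n) ℂ) (u : (Fin (m+1) → Fin n) → ℂ) :
    F (Fin.cons A (fun _ => 1)) u = ∑ K : Fin m → Fin n, ∑ j : Fin n, ∑ k : Fin n,
      A j k * u (Fin.cons j K) * (starRingEnd ℂ) (u (Fin.cons k K)) := by
  unfold F
  rw [sum_cons]
  simp only [sum_cons (n := n) (m := m), Fin.prod_univ_succ, Fin.cons_zero, Fin.cons_succ,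
    Matrix.one_apply, prod_ite]
  rw [Finset.sum_comm]
  refine Finset.sum_congr rfl fun K _ => Finset.sum_congr rfl fun j _ =>
    Finset.sum_congr rfl fun k _ => ?_
  simp
  ring

lemma F_cons_alt {n m : ℕ} (A : Matrix (Fin n) (Fin n) ℂ) {u : (Fin (m+1) → Fin n) → ℂ}
    (h : Alt u) :
    F (Fin.cons A (fun _ => 1)) u = (m.factorial : ℂ) *
      ∑ K ∈ Finset.univ.filter (fun K : Fin m → Fin n => StrictMono K),
      ∑ j : Fin n, ∑ k : Fin n,
      A j k * u (Fin.cons j K) * (starRingEnd ℂ) (u (Fin.cons k K)) := by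
  rw [F_cons, sum_symm]
  · intro K σ
    have key : ∀ j, u (Fin.cons j (K ∘ σ)) =
        ((Equiv.Perm.sign σ : ℤ) : ℂ) * u (Fin.cons j K) := by
      intro j
      have := h (Fin.cons j K) (Equiv.Perm.decomposeFin.symm (0, σ))
      rw [Equiv.Perm.decomposeFin.symm_sign] at this
      simp only [if_true, one_mul] at this
      rw [← this]
      congr 1
      funext i
      refine Fin.cases ?_ (fun i => ?_) i
      · simp
      · simp
    refine Finset.sum_congr rfl fun j _ => Finset.sum_congr rfl fun k _ => ?_
    rw [key, key, map_mul]
    have := sgn_mul σ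
    simp only [map_intCast]
    linear_combination (A j k * u (Fin.cons j K) * (starRingEnd ℂ) (u (Fin.cons k K))) * this
  · intro K hK
    have : ∀ j, u (Fin.cons j K) = 0 := fun j => h.zero _ fun hi => hK fun a b hab => by
      have := @hi a.succ b.succ (by simpa using hab)
      simpa using this
    simp [this]

/-- change of basis -/
noncomputable def T {n q : ℕ} (W : Matrix (Fin n) (Fin n) ℂ) (u : (Fin q → Fin n) → ℂ) :
    (Fin q → Fin n) → ℂ := fun J => ∑ I, u I * ∏ i, W (I i) (J i)

lemma T_alt {n q : ℕ} (W : Matrix (Fin n) (Fin n) ℂ) {u : (Fin q → Fin n) → ℂ} (h : Alt u) :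
    Alt (T W u) := by
  intro J σ
  unfold T
  rw [Finset.mul_sum, ← Equiv.sum_comp (Equiv.arrowCongr σ.symm (Equiv.refl (Fin n)))]
  refine Finset.sum_congr rfl fun I _ => ?_
  have : (Equiv.arrowCongr σ.symm (Equiv.refl (Fin n))) I = I ∘ σ := by
    funext x; simp
  rw [this, h I σ, mul_assoc]
  congr 2
  exact Equiv.prod_comp σ (fun i => W (I i) (J i))

lemma F_T {n q : ℕ} (W : Matrix (Fin n) (Fin n) ℂ) (u : (Fin q → Fin n) → ℂ)
    (B : Fin q → Matrix (Fin n) (Fin n) ℂ) (l : Fin q → Fin n → ℂ)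
    (hB : ∀ i a b, B i a b = ∑ j, l i j * (W a j * (starRingEnd ℂ) (W b j))) :
    F B u = ∑ J : Fin q → Fin n, (∏ i, l i (J i)) * ((‖T W u J‖^2 : ℝ) : ℂ) := by
  unfold F
  simp only [hB, Finset.prod_univ_sum, Fintype.piFinset_univ]
  have : ∀ J, ((‖T W u J‖^2 : ℝ) : ℂ) = ∑ I, ∑ I', (u I * ∏ i, W (I i) (J i)) *
      (starRingEnd ℂ) (u I' * ∏ i, W (I' i) (J i)) := by
    intro J
    rw [← Finset.sum_mul_sum, ← map_sum]
    change _ = T W u J * (starRingEnd ℂ) (T W u J)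
    rw [Complex.mul_conj']; push_cast; rfl
  simp only [this, Finset.mul_sum]
  symm
  rw [Finset.sum_comm]
  refine Finset.sum_congr rfl fun I _ => ?_
  rw [Finset.sum_comm]
  refine Finset.sum_congr rfl fun I' _ => Finset.sum_congr rfl fun J _ => ?_
  simp only [map_mul, map_prod, Finset.prod_mul_distrib]
  ring

noncomputable def D {n q : ℕ} (t : Fin q → Fin n → ℂ) : (Fin q → Fin n) → ℂ :=
  fun J => ∑ σ : Equiv.Perm (Fin q), ((Equiv.Perm.sign σ : ℤ) : ℂ) * ∏ k, t (σ k) (J k)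

lemma D_alt {n q : ℕ} (t : Fin q → Fin n → ℂ) : Alt (D t) := by
  intro J τ
  unfold D
  rw [Finset.mul_sum, ← Equiv.sum_comp (Equiv.mulRight τ)]
  refine Finset.sum_congr rfl fun σ _ => ?_
  rw [← mul_assoc]
  congr 1
  · simp [mul_comm]
  · simp only [Equiv.coe_mulRight, Equiv.Perm.coe_mul, Function.comp]
    exact Equiv.prod_comp τ (fun i => t (σ i) (J i))

noncomputable def S {n : ℕ} (B : Matrix (Fin n) (Fin n) ℂ) (x y : Fin n → ℂ) : ℂ :=
  ∑ j, ∑ k, B j k * x j * (starRingEnd ℂ) (y k)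

lemma F_D {n q : ℕ} (t : Fin q → Fin n → ℂ) (B : Fin q → Matrix (Fin n) (Fin n) ℂ) :
    F B (D t) = ∑ σ : Equiv.Perm (Fin q), ∑ τ : Equiv.Perm (Fin q),
      ((Equiv.Perm.sign σ : ℤ) : ℂ) * ((Equiv.Perm.sign τ : ℤ) : ℂ) *
        ∏ k, S (B k) (t (σ k)) (t (τ k)) := by
  have e : ∀ σ τ : Equiv.Perm (Fin q), ∏ k, S (B k) (t (σ k)) (t (τ k)) =
      ∑ I : Fin q → Fin n, ∑ I' : Fin q → Fin n, (∏ k, t (σ k) (I k)) *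
        (starRingEnd ℂ) (∏ k, t (τ k) (I' k)) * ∏ k, B k (I k) (I' k) := by
    intro σ τ
    unfold S
    simp only [Finset.prod_univ_sum, Fintype.piFinset_univ]
    refine Finset.sum_congr rfl fun I _ => Finset.sum_congr rfl fun I' _ => ?_
    simp only [map_prod, Finset.prod_mul_distrib]
    ring
  unfold F D
  simp only [e, Finset.mul_sum, map_sum, Finset.sum_mul]
  simp only [Finset.sum_comm (s := (Finset.univ : Finset (Fin q → Fin n)))
    (t := (Finset.univ : Finset (Equiv.Perm (Fin q))))]
  rw [Finset.sum_comm]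
  refine Finset.sum_congr rfl fun σ _ => Finset.sum_congr rfl fun τ _ =>
    Finset.sum_congr rfl fun I _ => Finset.sum_congr rfl fun I' _ => ?_
  simp only [map_mul, map_intCast]
  ring

lemma S_one {n q : ℕ} (t : Fin q → EuclideanSpace ℂ (Fin n)) (ht : Orthonormal ℂ t) (i j : Fin q) :
    S 1 (t i) (t j) = if i = j then 1 else 0 := by
  have := orthonormal_iff_ite.mp ht j i
  rw [PiLp.inner_apply] at this
  simp only [eq_comm (a := i), ← this]
  unfold S
  refine Finset.sum_congr rfl fun a _ => ?_
  simp [Matrix.one_apply]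

lemma F_D_one {n q : ℕ} (t : Fin q → EuclideanSpace ℂ (Fin n)) (ht : Orthonormal ℂ t) :
    F (fun _ => 1) (D (fun i => (t i : Fin n → ℂ))) = (q.factorial : ℂ) := by
  rw [F_D]
  simp only [S_one t ht, prod_ite, DFunLike.coe_fn_eq]
  simp [sgn_mul, Fintype.card_perm]

lemma F_D_cons {n m : ℕ} (A : Matrix (Fin n) (Fin n) ℂ)
    (t : Fin (m+1) → EuclideanSpace ℂ (Fin n)) (ht : Orthonormal ℂ t) :
    F (Fin.cons A (fun _ => 1)) (D (fun i => (t i : Fin n → ℂ))) =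
      (m.factorial : ℂ) * ∑ i, S A (t i) (t i) := by
  rw [F_D]
  simp only [Fin.prod_univ_succ, Fin.cons_zero, Fin.cons_succ, S_one t ht]
  have hp : ∀ σ τ : Equiv.Perm (Fin (m+1)),
      ∏ i : Fin m, (if σ i.succ = τ i.succ then (1:ℂ) else 0) = if σ = τ then 1 else 0 := by
    intro σ τ
    rw [prod_ite (fun i : Fin m => σ i.succ) (fun i => τ i.succ)]
    refine if_congr ⟨fun h => ?_, fun h => by rw [h]⟩ rfl rfl
    have h1 : ∀ i : Fin m, σ i.succ = τ i.succ := congrFun h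
    refine Equiv.ext fun i => Fin.cases ?_ h1 i
    obtain ⟨k, hk⟩ := τ.surjective (σ 0)
    revert hk
    refine Fin.cases (fun hk => hk.symm) (fun j hk => ?_) k
    rw [← h1] at hk
    exact absurd (σ.injective hk) (Fin.succ_ne_zero j)
  simp only [hp]
  simp only [mul_ite, mul_one, mul_zero, Finset.sum_ite_eq, Finset.mem_univ, if_true, sgn_mul,
    one_mul]
  rw [← Equiv.sum_comp Equiv.Perm.decomposeFin.symm, Fintype.sum_prod_type, Finset.mul_sum]
  refine Finset.sum_congr rfl fun i _ => ?_
  simp [Fintype.card_perm]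

end HQ

namespace HQ

lemma spec {n : ℕ} (A : Matrix (Fin n) (Fin n) ℂ) (hA : A.IsHermitian) :
    ∃ (W : Matrix (Fin n) (Fin n) ℂ) (l : Fin n → ℝ),
      (∀ a b, A a b = ∑ j, (l j : ℂ) * (W a j * (starRingEnd ℂ) (W b j))) ∧
      (∀ a b, (1 : Matrix (Fin n) (Fin n) ℂ) a b = ∑ j, (W a j * (starRingEnd ℂ) (W b j))) ∧
      (∀ a b, (1 : Matrix (Fin n) (Fin n) ℂ) a b = ∑ j, ((starRingEnd ℂ) (W j a) * W j b)) := by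
  refine ⟨hA.eigenvectorUnitary, hA.eigenvalues, ?_, ?_, ?_⟩
  · intro a b
    conv_lhs => rw [hA.spectral_theorem, Unitary.conjStarAlgAut_apply]
    rw [Matrix.mul_apply]
    refine Finset.sum_congr rfl fun j _ => ?_
    rw [Matrix.mul_diagonal, Matrix.star_apply]
    simp only [Function.comp, RCLike.star_def]
    change _ * (hA.eigenvalues j : ℂ) * _ = _
    ring
  · intro a b
    have := Unitary.coe_mul_star_self hA.eigenvectorUnitary
    rw [← this, Matrix.mul_apply]
    rfl
  · intro a b
    have := Unitary.coe_star_mul_self hA.eigenvectorUnitary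
    rw [← this, Matrix.mul_apply]
    rfl

lemma sum_swap {n m : ℕ} (l : Fin n → ℝ) {v : (Fin (m+1) → Fin n) → ℂ} (h : Alt v) :
    ((m+1 : ℕ) : ℝ) * ∑ J, l (J 0) * ‖v J‖^2 = ∑ J, (∑ i, l (J i)) * ‖v J‖^2 := by
  simp only [Finset.sum_mul]
  rw [Finset.sum_comm]
  have : ∀ i : Fin (m+1), ∑ J, l (J i) * ‖v J‖^2 = ∑ J, l (J 0) * ‖v J‖^2 := by
    intro i
    rw [← Equiv.sum_comp (Equiv.arrowCongr (Equiv.swap 0 i).symm (Equiv.refl (Fin n)))]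
    refine Finset.sum_congr rfl fun J _ => ?_
    have e : (Equiv.arrowCongr (Equiv.swap 0 i).symm (Equiv.refl (Fin n))) J
        = J ∘ (Equiv.swap 0 i) := by
      funext x; simp
    rw [e, h J, norm_mul]
    congr 1
    · simp
    · rcases Int.units_eq_one_or (Equiv.Perm.sign (Equiv.swap 0 i)) with h | h <;> simp [h]
  simp [this]

lemma S_eig {n : ℕ} (A W : Matrix (Fin n) (Fin n) ℂ) (l : Fin n → ℝ)
    (hW1 : ∀ a b, A a b = ∑ j, (l j : ℂ) * (W a j * (starRingEnd ℂ) (W b j)))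
    (hW3 : ∀ a b, (1 : Matrix (Fin n) (Fin n) ℂ) a b = ∑ j, ((starRingEnd ℂ) (W j a) * W j b))
    (c : Fin n) :
    S A (fun j => (starRingEnd ℂ) (W j c)) (fun j => (starRingEnd ℂ) (W j c)) = l c := by
  have : S A (fun j => (starRingEnd ℂ) (W j c)) (fun j => (starRingEnd ℂ) (W j c)) =
      ∑ p, (l p : ℂ) * ((∑ j, ((starRingEnd ℂ) (W j c) * W j p)) *
        (∑ k, ((starRingEnd ℂ) (W k p) * W k c))) := by
    unfold S
    simp only [Finset.sum_mul_sum]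
    simp only [hW1, Finset.mul_sum, Finset.sum_mul]
    symm
    rw [Finset.sum_comm]
    refine Finset.sum_congr rfl fun j _ => ?_
    rw [Finset.sum_comm]
    refine Finset.sum_congr rfl fun k _ => Finset.sum_congr rfl fun p _ => ?_
    simp only [Complex.conj_conj]
    ring
  rw [this]
  simp only [← hW3, Matrix.one_apply]
  simp

end HQ

open HQ

/-- Let `A` be an `n × n` complex Hermitian matrix, `1 ≤ q ≤ n`, `M ≥ 0`.
Then `H_q(A)(u) ≥ M |u|²` for every alternating `q`-array `u` if and only if for every
orthonormal family `t¹, …, t^q` in `ℂⁿ` one has `∑_{i=1}^q Q_A(tⁱ) ≥ M`. -/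
theorem stmt7 {n q : ℕ} (hq : 1 ≤ q) (hqn : q ≤ n)
    (A : Matrix (Fin n) (Fin n) ℂ) (hA : A.IsHermitian) (M : ℝ) (hM : 0 ≤ M) :
    (∀ u : (Fin q → Fin n) → ℂ,
        (∀ (J : Fin q → Fin n) (σ : Equiv.Perm (Fin q)),
            u (J ∘ σ) = ((Equiv.Perm.sign σ : ℤ) : ℂ) * u J) →
        ((M * ∑ J ∈ Finset.univ.filter (fun J : Fin q → Fin n => StrictMono J), ‖u J‖ ^ 2 : ℝ) : ℂ)
          ≤ ∑ K ∈ Finset.univ.filter (fun K : Fin (q - 1) → Fin n => StrictMono K),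
              ∑ j : Fin n, ∑ k : Fin n,
                A j k * u (fun i => (Fin.cons j K : Fin (q - 1 + 1) → Fin n) (Fin.cast (Nat.succ_pred_eq_of_pos hq).symm i))
                  * (starRingEnd ℂ)
                      (u (fun i => (Fin.cons k K : Fin (q - 1 + 1) → Fin n) (Fin.cast (Nat.succ_pred_eq_of_pos hq).symm i))))
    ↔ (∀ t : Fin q → EuclideanSpace ℂ (Fin n), Orthonormal ℂ t →
        (M : ℂ) ≤ ∑ i : Fin q, ∑ j : Fin n, ∑ k : Fin n,
          A j k * t i j * (starRingEnd ℂ) (t i k)) := by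
  obtain ⟨m, rfl⟩ : ∃ m, q = m + 1 := ⟨q - 1, by omega⟩
  change (∀ u : (Fin (m+1) → Fin n) → ℂ, Alt u →
        ((M * ∑ J ∈ Finset.univ.filter (fun J : Fin (m+1) → Fin n => StrictMono J), ‖u J‖ ^ 2 : ℝ) : ℂ)
          ≤ ∑ K ∈ Finset.univ.filter (fun K : Fin m → Fin n => StrictMono K),
              ∑ j : Fin n, ∑ k : Fin n,
                A j k * u (Fin.cons j K : Fin (m + 1) → Fin n)
                  * (starRingEnd ℂ) (u (Fin.cons k K : Fin (m + 1) → Fin n)))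
    ↔ (∀ t : Fin (m+1) → EuclideanSpace ℂ (Fin n), Orthonormal ℂ t →
        (M : ℂ) ≤ ∑ i : Fin (m+1), S A (t i) (t i))
  have hm : (m.factorial : ℂ) ≠ 0 := by exact_mod_cast m.factorial_ne_zero
  have hm1 : ((m+1).factorial : ℂ) ≠ 0 := by exact_mod_cast (m+1).factorial_ne_zero
  constructor
  · intro H t ht
    have h := H _ (D_alt (fun i => (t i : Fin n → ℂ)))
    have e1 := F_cons_alt A (D_alt (fun i => (t i : Fin n → ℂ)))
    rw [F_D_cons A t ht] at e1
    have e2 := F_one_alt (D_alt (fun i => (t i : Fin n → ℂ)))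
    rw [F_D_one t ht] at e2
    rw [← mul_left_cancel₀ hm e1, Complex.ofReal_mul, Complex.ofReal_sum,
      ← mul_left_cancel₀ hm1 ((mul_one _).trans e2), mul_one] at h
    exact h
  · intro H u hu
    obtain ⟨W, l, hW1, hW2, hW3⟩ := spec A hA
    have hv := T_alt W hu
    have e1 := F_cons_alt A hu
    have e2 := F_one_alt hu
    rw [F_T W u _ (Fin.cons (fun j => (l j : ℂ)) (fun _ _ => 1))] at e1
    · rw [F_T W u _ (fun _ _ => 1) (by intro i a b; simpa using hW2 a b)] at e2
      simp only [Fin.prod_univ_succ, Fin.cons_zero, Fin.cons_succ, Finset.prod_const_one, mul_one,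
        one_mul] at e1 e2
      have e3 := sum_swap l hv
      have ineq : ∑ J, M * ‖T W u J‖^2 ≤ ∑ J, (∑ i, l (J i)) * ‖T W u J‖^2 := by
        refine Finset.sum_le_sum fun J _ => ?_
        by_cases hJ : Function.Injective J
        · refine mul_le_mul_of_nonneg_right ?_ (by positivity)
          have := H (fun i => WithLp.toLp 2 (fun j => (starRingEnd ℂ) (W j (J i)))) (by
            rw [orthonormal_iff_ite]
            intro a b
            rw [PiLp.inner_apply]
            have h3 := hW3 (J b) (J a)
            rw [Matrix.one_apply] at h3
            simp only [hJ.eq_iff, eq_comm (a := b)] at h3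
            rw [h3]
            refine Finset.sum_congr rfl fun j _ => ?_
            simp)
          simp only [S_eig A W l hW1 hW3] at this
          exact_mod_cast this
        · rw [hv.zero J hJ]; simp
      rw [← e3, ← Finset.mul_sum] at ineq
      set N := ∑ J ∈ Finset.univ.filter (fun J : Fin (m+1) → Fin n => StrictMono J), ‖u J‖ ^ 2
      have e2' : ∑ J, ‖T W u J‖^2 = ((m+1).factorial : ℝ) * N := by
        exact_mod_cast e2
      rw [e2'] at ineq
      have hmr : (0:ℝ) < m.factorial := by exact_mod_cast m.factorial_pos
      have hh := (eq_div_iff hm).mpr ((mul_comm _ _).trans e1.symm)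
      rw [hh]
      have : M * N ≤ (∑ J, l (J 0) * ‖T W u J‖^2) / (m.factorial : ℝ) := by
        rw [le_div_iff₀ hmr]
        rw [Nat.factorial_succ] at ineq
        push_cast at ineq
        have hp : (0:ℝ) < m + 1 := by positivity
        refine le_of_mul_le_mul_left ?_ hp
        linarith
      exact_mod_cast this
    · intro i a b
      refine Fin.cases ?_ (fun i => ?_) i
      · simpa using hW1 a b
      · simpa using hW2 a b
end
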